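/- Every simple planar graph of maximum degree at most 3 admits an embedding in the two-dimensional integer grid in which each vertex is mapped to a distinct grid point and each edge is mapped to a path of axis-parallel grid segments, such that the paths corresponding to distinct edges are internally disjoint (they share at most common endpoints). -/

import Mathlib

/-- The set of edges incident to a vertex `v`. -/
def incidentEdges {V E : Type} [Fintype E] [DecidableEq V] [DecidableEq E]
    (ends : E → V × V) (v : V) : Finset E :=
  Finset.univ.filter (fun e => (ends e).1 = v ∨ (ends e).2 = v)

/-- A plane drawing of a graph: vertices are mapped injectively to points of
`ℝ²` and each edge to a simple arc joining the points of its endpoints, such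
that arcs of distinct edges meet at most at common endpoints. -/
def IsPlaneDrawing {V E : Type} (ends : E → V × V) (pos : V → ℝ × ℝ)
    (γ : E → ℝ → ℝ × ℝ) : Prop :=
  Function.Injective pos ∧
  (∀ e, ContinuousOn (γ e) (Set.Icc 0 1)) ∧
  (∀ e, γ e 0 = pos (ends e).1 ∧ γ e 1 = pos (ends e).2) ∧
  (∀ e, Set.InjOn (γ e) (Set.Icc 0 1)) ∧
  (∀ e e', e ≠ e' → ∀ s ∈ Set.Icc (0:ℝ) 1, ∀ t ∈ Set.Icc (0:ℝ) 1,
    γ e s = γ e' t → (s = 0 ∨ s = 1) ∧ (t = 0 ∨ t = 1))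

/-- Two grid points are adjacent if they differ by one unit step in exactly
one coordinate. -/
def gridAdj (a b : ℤ × ℤ) : Prop :=
  (a.1 - b.1).natAbs + (a.2 - b.2).natAbs = 1


/-!
Fatten the drawing: a small ball around each vertex, and a thin tube around the middle part of each
arc, long enough to reach the balls of the endpoints of the arc. By compactness the balls are
pairwise disjoint, the tubes are pairwise disjoint, and a tube only meets the balls at its own
ends. On a sufficiently fine grid, balls and tubes contain connected sets of grid points. Shrinking
each tube to a path that meets either end ball in a single grid point leaves at most three
attachment points in each ball, and any three points of a connected set are the feet of a tripod in
it, whose centre becomes the position of the vertex.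
-/

open Set Filter Topology Metric SimpleGraph

section ConnectedSets

variable {W : Type*} {G : SimpleGraph W}

theorem exists_isPath_of_preconnected_induce {s : Set W} (hs : (G.induce s).Preconnected)
    {x y : W} (hx : x ∈ s) (hy : y ∈ s) :
    ∃ p : G.Walk x y, p.IsPath ∧ ∀ z ∈ p.support, z ∈ s := by
  obtain ⟨p, hp⟩ := (hs ⟨x, hx⟩ ⟨y, hy⟩).exists_isPath
  refine ⟨p.map (Embedding.induce s).toHom, hp.map (Embedding.induce (G := G) s).injective,
    fun z hz ↦ ?_⟩
  obtain ⟨w, -, rfl⟩ := List.mem_map.1 (Walk.support_map _ p ▸ hz)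
  exact w.2

theorem exists_connected_induce_inter_eq_singleton {s t : Set W} {x : W}
    (hs : (G.induce s).Preconnected) (hx : x ∈ s) (hst : (s ∩ t).Nonempty) :
    ∃ u ⊆ s, (G.induce u).Connected ∧ x ∈ u ∧ ∃ y, u ∩ t = {y} := by
  classical
  obtain ⟨w, hws, hwt⟩ := hst
  obtain ⟨p, -, hps⟩ := exists_isPath_of_preconnected_induce hs hx hws
  obtain ⟨y, hyt, hyp, hfirst⟩ := p.exists_mem_support_forall_mem_support_imp_eq
    (p.support.toFinset.filter (· ∈ t)) ⟨w, by simp [hwt]⟩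
  have hsub := p.support_takeUntil_subset_support hyp
  refine ⟨{z | z ∈ (p.takeUntil y hyp).support}, fun z hz ↦ hps z (hsub hz),
    Walk.connected_induce_support _, Walk.start_mem_support _, y, ?_⟩
  refine Subset.antisymm (fun z hz ↦ ?_) ?_
  · exact hfirst z (by simpa using ⟨hsub hz.1, hz.2⟩) hz.1
  · rintro _ rfl
    exact ⟨Walk.end_mem_support _, (Finset.mem_filter.1 hyt).2⟩

theorem exists_connected_induce_inter_eq_singleton_pair {s t t' : Set W}
    (hs : (G.induce s).Preconnected) (ht : (s ∩ t).Nonempty) (ht' : (s ∩ t').Nonempty) :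
    ∃ u ⊆ s, (G.induce u).Connected ∧ (∃ x, u ∩ t = {x}) ∧ ∃ y, u ∩ t' = {y} := by
  obtain ⟨x, hxs, hxt⟩ := ht
  obtain ⟨u, hus, hu, hxu, y, huy⟩ := exists_connected_induce_inter_eq_singleton hs hxs ht'
  have hy : y ∈ u ∩ t' := huy ▸ mem_singleton y
  obtain ⟨u', hu'u, hu', hyu', hx⟩ :=
    exists_connected_induce_inter_eq_singleton hu.preconnected hy.1 ⟨x, hxu, hxt⟩
  refine ⟨u', hu'u.trans hus, hu', hx, y, Subset.antisymm ?_ ?_⟩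
  · exact huy ▸ inter_subset_inter_left t' hu'u
  · exact singleton_subset_iff.2 ⟨hyu', hy.2⟩

/-- A spider of `G` inside `s`: connected vertex sets `leg i`, joining a centre `c` to the
prescribed feet `a i`, that meet each other only at `c`. -/
structure IsSpider {ι : Type*} (G : SimpleGraph W) (s : Set W) (a : ι → W) (c : W)
    (leg : ι → Set W) : Prop where
  center_mem : c ∈ s
  connected_leg : ∀ i, (G.induce (leg i)).Connected
  leg_subset : ∀ i, leg i ⊆ s
  center_mem_leg : ∀ i, c ∈ leg i
  foot_mem_leg : ∀ i, a i ∈ leg i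
  pairwise_inter_subset : Pairwise fun i j ↦ leg i ∩ leg j ⊆ {c}

theorem IsSpider.comp {ι κ : Type*} {s : Set W} {a : κ → W} {c : W} {leg : κ → Set W}
    (h : IsSpider G s a c leg) {f : ι → κ} (hf : f.Injective) :
    IsSpider G s (a ∘ f) c (leg ∘ f) where
  center_mem := h.center_mem
  connected_leg i := h.connected_leg (f i)
  leg_subset i := h.leg_subset (f i)
  center_mem_leg i := h.center_mem_leg (f i)
  foot_mem_leg i := h.foot_mem_leg (f i)
  pairwise_inter_subset _ _ hij := h.pairwise_inter_subset (hf.ne hij)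

theorem exists_isSpider_fin_three {s : Set W} (hs : (G.induce s).Preconnected) (a : Fin 3 → W)
    (ha : ∀ i, a i ∈ s) : ∃ c leg, IsSpider G s a c leg := by
  obtain ⟨p, hp, hps⟩ := exists_isPath_of_preconnected_induce hs (ha 0) (ha 1)
  -- The centre is the first vertex of `p` met on the way from `a 2` to `a 0`.
  obtain ⟨u, hus, hu, hau, c, huc⟩ := exists_connected_induce_inter_eq_singleton
    (t := {z | z ∈ p.support}) hs (ha 2) ⟨a 0, ha 0, p.start_mem_support⟩
  have hc : c ∈ u ∩ {z | z ∈ p.support} := huc ▸ mem_singleton c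
  obtain ⟨q, r, -, -, rfl⟩ := hp.mem_support_iff_exists_append.1 hc.2
  have hqr : {z | z ∈ q.support} ∩ {z | z ∈ r.support} ⊆ {c} := fun z hz ↦
    by_contra fun hzc ↦ hp.ne_of_mem_support_of_append hzc hz.1 hz.2 rfl
  have huq : u ∩ {z | z ∈ q.support} ⊆ {c} := huc ▸
    inter_subset_inter_right u fun z hz ↦ (Walk.mem_support_append_iff q r).2 (.inl hz)
  have hur : u ∩ {z | z ∈ r.support} ⊆ {c} := huc ▸
    inter_subset_inter_right u fun z hz ↦ (Walk.mem_support_append_iff q r).2 (.inr hz)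
  simp only [Walk.mem_support_append_iff] at hps
  refine ⟨c, ![{z | z ∈ q.support}, {z | z ∈ r.support}, u], hus hc.1, ?_, ?_, ?_, ?_, ?_⟩
  · simpa [Fin.forall_fin_succ, hu] using ⟨q.connected_induce_support, r.connected_induce_support⟩
  · simpa [Fin.forall_fin_succ, hus] using
      ⟨fun z hz ↦ hps z (.inl hz), fun z hz ↦ hps z (.inr hz)⟩
  · simp [Fin.forall_fin_succ, hc.1]
  · simp [Fin.forall_fin_succ, hau]
  · intro i j hij
    fin_cases i <;> fin_cases j <;>
      first | exact absurd rfl hij | assumption | (rw [inter_comm]; assumption)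

theorem exists_isSpider_of_card_le_three {ι : Type*} [Finite ι] (hι : Nat.card ι ≤ 3) {s : Set W}
    (hs : (G.induce s).Connected) (a : ι → W) (ha : ∀ i, a i ∈ s) :
    ∃ c leg, IsSpider G s a c leg := by
  obtain ⟨⟨d, hd⟩⟩ := hs.nonempty
  let f : ι ↪ Fin 3 := (Finite.equivFin ι).toEmbedding.trans (Fin.castLEEmb hι)
  obtain ⟨b, hb, rfl⟩ : ∃ b : Fin 3 → W, (∀ k, b k ∈ s) ∧ b ∘ f = a := by
    refine ⟨Function.extend f a fun _ ↦ d, fun k ↦ ?_,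
      funext fun i ↦ f.injective.extend_apply _ _ i⟩
    by_cases hk : ∃ i, f i = k
    · obtain ⟨i, rfl⟩ := hk
      rw [f.injective.extend_apply]
      exact ha i
    · rwa [Function.extend_apply' _ _ _ hk]
  obtain ⟨c, leg, h⟩ := exists_isSpider_fin_three hs.preconnected b hb
  exact ⟨c, leg ∘ f, h.comp f.injective⟩

end ConnectedSets

section MinorModels

variable {V E W : Type*} {G : SimpleGraph W} {ends : E → V × V}

/-- Incidence of the edge `e` and the vertex `v` in the multigraph given by `ends`. -/
def IsIncident (ends : E → V × V) (e : E) (v : V) : Prop :=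
  (ends e).1 = v ∨ (ends e).2 = v

/-- A minor model in `G` of the multigraph given by `ends`: disjoint connected sets `branch v`
representing the vertices, and disjoint connected sets `link e` representing the edges. Links may
overlap the branch sets of their ends. They may also overlap the branch set of an isolated vertex,
since in a plane drawing such a vertex may lie on an arc. -/
structure IsMinorModel (G : SimpleGraph W) (ends : E → V × V) (branch : V → Set W)
    (link : E → Set W) : Prop where
  connected_branch : ∀ v, (G.induce (branch v)).Connected
  connected_link : ∀ e, (G.induce (link e)).Connected
  disjoint_branch : Pairwise (Function.onFun Disjoint branch)
  disjoint_link : Pairwise (Function.onFun Disjoint link)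
  disjoint_link_branch : ∀ {e e' v}, IsIncident ends e v → ¬IsIncident ends e' v →
    Disjoint (link e') (branch v)
  inter_nonempty : ∀ {e v}, IsIncident ends e v → (link e ∩ branch v).Nonempty

/-- A subdivision in `G` of the multigraph given by `ends`: edges become paths of `G` that meet only
at the positions of common ends. -/
structure IsSubdivision (G : SimpleGraph W) (ends : E → V × V) (pos : V → W)
    (path : ∀ e, G.Walk (pos (ends e).1) (pos (ends e).2)) : Prop where
  injective_pos : Function.Injective pos
  isPath : ∀ e, (path e).IsPath
  eq_pos_of_mem_of_mem : ∀ {e e' z}, e ≠ e' → z ∈ (path e).support → z ∈ (path e').support →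
    ∃ v, IsIncident ends e v ∧ IsIncident ends e' v ∧ z = pos v

namespace IsMinorModel

variable {branch : V → Set W} {link : E → Set W}

theorem exists_link_inter_branch_eq_singleton (h : IsMinorModel G ends branch link) :
    ∃ link', IsMinorModel G ends branch link' ∧
      ∀ e v, IsIncident ends e v → ∃ x, link' e ∩ branch v = {x} := by
  choose link' hsub hconn hfst hsnd using fun e ↦
    exists_connected_induce_inter_eq_singleton_pair (h.connected_link e).preconnected
      (h.inter_nonempty (.inl rfl : IsIncident ends e (ends e).1))
      (h.inter_nonempty (.inr rfl : IsIncident ends e (ends e).2))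
  have hsingle : ∀ e v, IsIncident ends e v → ∃ x, link' e ∩ branch v = {x} := by
    rintro e v (rfl | rfl)
    exacts [hfst e, hsnd e]
  refine ⟨link', ⟨h.connected_branch, hconn, h.disjoint_branch, ?_, ?_, ?_⟩, hsingle⟩
  · exact fun e e' he ↦ (h.disjoint_link he).mono (hsub e) (hsub e')
  · exact fun he he' ↦ (h.disjoint_link_branch he he').mono_left (hsub _)
  · intro e v he
    obtain ⟨x, hx⟩ := hsingle e v he
    exact hx ▸ singleton_nonempty x

theorem exists_isSpider_link_inter_branch (h : IsMinorModel G ends branch link)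
    (hdeg : ∀ v, {e | IsIncident ends e v}.encard ≤ 3) :
    ∃ (link' : E → Set W) (foot : ∀ v, {e | IsIncident ends e v} → W) (pos : V → W)
      (leg : ∀ v, {e | IsIncident ends e v} → Set W), IsMinorModel G ends branch link' ∧
      (∀ v (e : {e | IsIncident ends e v}), link' e ∩ branch v = {foot v e}) ∧
      ∀ v, IsSpider G (branch v) (foot v) (pos v) (leg v) := by
  obtain ⟨link', h', hsingle⟩ := h.exists_link_inter_branch_eq_singleton
  choose foot hfoot using fun v (e : {e | IsIncident ends e v}) ↦ hsingle e v e.2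
  have hspider v : ∃ c leg, IsSpider G (branch v) (foot v) c leg := by
    obtain ⟨hfin, hcard⟩ := encard_le_coe_iff_finite_ncard_le.1 (hdeg v)
    have := hfin.to_subtype
    exact exists_isSpider_of_card_le_three hcard (h.connected_branch v) _
      fun e ↦ ((hfoot v e).superset (mem_singleton _)).2
  choose pos leg hleg using hspider
  exact ⟨link', foot, pos, leg, h', hfoot, hleg⟩

theorem exists_connected_threads (h : IsMinorModel G ends branch link)
    (hdeg : ∀ v, {e | IsIncident ends e v}.encard ≤ 3) :
    ∃ (pos : V → W) (thread : E → Set W), (∀ v, pos v ∈ branch v) ∧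
      (∀ e, (G.induce (thread e)).Connected) ∧
      (∀ e v, IsIncident ends e v → pos v ∈ thread e) ∧
      ∀ e e', e ≠ e' → ∀ z ∈ thread e ∩ thread e',
        ∃ v, IsIncident ends e v ∧ IsIncident ends e' v ∧ z = pos v := by
  obtain ⟨link, foot, pos, leg, h, hfoot, hleg⟩ := h.exists_isSpider_link_inter_branch hdeg
  have hfoot_mem v (e : {e | IsIncident ends e v}) : foot v e ∈ link e :=
    ((hfoot v e).superset (mem_singleton _)).1
  let fst e : {e' | IsIncident ends e' (ends e).1} := ⟨e, .inl rfl⟩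
  let snd e : {e' | IsIncident ends e' (ends e).2} := ⟨e, .inr rfl⟩
  let thread e := leg _ (fst e) ∪ link e ∪ leg _ (snd e)
  have leg_or_link {e z} (hz : z ∈ thread e) :
      (∃ v, ∃ he : IsIncident ends e v, z ∈ leg v ⟨e, he⟩) ∨ z ∈ link e := by
    rcases hz with (hz | hz) | hz
    exacts [.inl ⟨_, _, hz⟩, .inr hz, .inl ⟨_, _, hz⟩]
  have mem_leg {e e' v z} (he : IsIncident ends e v) (hzv : z ∈ branch v) (hz : z ∈ thread e') :
      ∃ he' : IsIncident ends e' v, z ∈ leg v ⟨e', he'⟩ := by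
    rcases leg_or_link hz with ⟨w, hw, hzw⟩ | hz
    · obtain rfl : v = w := h.disjoint_branch.eq
        (not_disjoint_iff.2 ⟨z, hzv, (hleg w).leg_subset _ hzw⟩)
      exact ⟨hw, hzw⟩
    · have he' : IsIncident ends e' v := by_contra fun he' ↦
        (h.disjoint_link_branch he he').notMem_of_mem_left hz hzv
      obtain rfl : z = foot v ⟨e', he'⟩ := (hfoot v ⟨e', he'⟩).subset ⟨hz, hzv⟩
      exact ⟨he', (hleg v).foot_mem_leg _⟩
  refine ⟨pos, thread, fun v ↦ (hleg v).center_mem, fun e ↦ ?_, ?_, ?_⟩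
  · refine induce_union_connected (induce_union_connected ((hleg _).connected_leg _).preconnected
      (h.connected_link e).preconnected ?_).preconnected ((hleg _).connected_leg _).preconnected ?_
    · exact ⟨_, (hleg _).foot_mem_leg (fst e), hfoot_mem _ (fst e)⟩
    · exact ⟨_, .inr (hfoot_mem _ (snd e)), (hleg _).foot_mem_leg (snd e)⟩
  · rintro e v (rfl | rfl)
    exacts [.inl (.inl ((hleg _).center_mem_leg _)), .inr ((hleg _).center_mem_leg _)]
  · intro e e' hee' z ⟨hz, hz'⟩
    obtain ⟨v, hv, hzv⟩ : ∃ v, (IsIncident ends e v ∨ IsIncident ends e' v) ∧ z ∈ branch v := by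
      rcases leg_or_link hz with ⟨v, hv, hzv⟩ | hzl
      · exact ⟨v, .inl hv, (hleg v).leg_subset _ hzv⟩
      rcases leg_or_link hz' with ⟨v, hv, hzv⟩ | hzl'
      · exact ⟨v, .inr hv, (hleg v).leg_subset _ hzv⟩
      · exact absurd hzl' ((h.disjoint_link hee').notMem_of_mem_left hzl)
    have ⟨he, hze⟩ : ∃ he : IsIncident ends e v, z ∈ leg v ⟨e, he⟩ :=
      hv.elim (mem_leg · hzv hz) (mem_leg · hzv hz)
    have ⟨he', hze'⟩ := mem_leg he hzv hz'
    exact ⟨v, he, he', (hleg v).pairwise_inter_subset (by simpa using hee') ⟨hze, hze'⟩⟩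

theorem exists_isSubdivision (h : IsMinorModel G ends branch link)
    (hdeg : ∀ v, {e | IsIncident ends e v}.encard ≤ 3) :
    ∃ pos path, IsSubdivision G ends pos path := by
  obtain ⟨pos, thread, hpos, hconn, hmem, hmeet⟩ := h.exists_connected_threads hdeg
  choose path hpath hsub using fun e ↦ exists_isPath_of_preconnected_induce
    (hconn e).preconnected (hmem e _ (.inl rfl)) (hmem e _ (.inr rfl))
  refine ⟨pos, path, ?_, hpath, fun hne hz hz' ↦ hmeet _ _ hne _ ⟨hsub _ _ hz, hsub _ _ hz'⟩⟩
  exact fun v w hvw ↦ h.disjoint_branch.eq (not_disjoint_iff.2 ⟨pos v, hpos v, hvw ▸ hpos w⟩)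

end IsMinorModel

end MinorModels

section Grid

theorem preconnected_induce_hasse {α : Type*} [LinearOrder α] [SuccOrder α] [IsSuccArchimedean α]
    {s : Set α} (hs : s.OrdConnected) : ((hasse α).induce s).Preconnected := by
  have hrange : (range (OrderEmbedding.subtype (· ∈ s))).OrdConnected := by simpa
  have hinduce : (hasse α).induce s = hasse s := by
    ext x y
    exact or_congr hrange.apply_covBy_apply_iff hrange.apply_covBy_apply_iff
  exact hinduce ▸ hasse_preconnected_of_succ s

theorem preconnected_induce_boxProd_prod {α β : Type*} {G : SimpleGraph α} {H : SimpleGraph β}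
    {s : Set α} {t : Set β} (hs : (G.induce s).Preconnected) (ht : (H.induce t).Preconnected) :
    ((G □ H).induce (s ×ˢ t)).Preconnected := by
  refine (hs.boxProd ht).map ⟨fun x ↦ ⟨(x.1, x.2), x.1.2, x.2.2⟩, ?_⟩ ?_
  · simp [boxProd_adj, Subtype.ext_iff]
  · rintro ⟨⟨x, y⟩, hx, hy⟩
    exact ⟨(⟨x, hx⟩, ⟨y, hy⟩), rfl⟩

theorem hasse_adj_iff_gridAdj {a b : ℤ × ℤ} : (hasse (ℤ × ℤ)).Adj a b ↔ gridAdj a b := by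
  simp only [hasse_adj, Prod.covBy_iff, Order.covBy_iff_add_one_eq, gridAdj]
  omega

/-- The point of the plane represented by `z` in the square grid of mesh `h`. -/
def meshPoint (h : ℝ) (z : ℤ × ℤ) : ℝ × ℝ :=
  (h * z.1, h * z.2)

/-- The points of the grid of mesh `h` that lie in the open `r`-neighbourhood of `S`. -/
def gridTrace (h r : ℝ) (S : Set (ℝ × ℝ)) : Set (ℤ × ℤ) :=
  meshPoint h ⁻¹' thickening r S

theorem exists_dist_meshPoint_lt {h : ℝ} (hh : 0 < h) (x : ℝ × ℝ) :
    ∃ z, dist (meshPoint h z) x < h := by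
  have hround (a : ℝ) : dist (h * round (a / h)) a < h := by
    calc dist (h * round (a / h)) a = h * |a / h - round (a / h)| := by
          rw [_root_.dist_comm, Real.dist_eq, ← abs_of_pos hh, ← abs_mul, abs_of_pos hh, mul_sub,
            mul_div_cancel₀ a hh.ne']
      _ ≤ h * (1 / 2) := by gcongr; exact abs_sub_round _
      _ < h := by linarith
  exact ⟨(round (x.1 / h), round (x.2 / h)), max_lt (hround x.1) (hround x.2)⟩

theorem mem_gridTrace_singleton {h r : ℝ} {x : ℝ × ℝ} {z : ℤ × ℤ} :
    z ∈ gridTrace h r {x} ↔ dist (meshPoint h z) x < r := by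
  rw [gridTrace, thickening_singleton, mem_preimage, Metric.mem_ball]

theorem gridTrace_mono {h r r' : ℝ} {S S' : Set (ℝ × ℝ)} (hr : r ≤ r') (hS : S ⊆ S') :
    gridTrace h r S ⊆ gridTrace h r' S' :=
  preimage_mono ((thickening_mono hr S).trans (thickening_subset_of_subset r' hS))

theorem preconnected_induce_gridTrace_singleton {h : ℝ} (hh : 0 ≤ h) (r : ℝ) (x : ℝ × ℝ) :
    ((hasse (ℤ × ℤ)).induce (gridTrace h r {x})).Preconnected := by
  have hconn (a : ℝ) : ((hasse ℤ).induce ((fun n : ℤ ↦ h * n) ⁻¹' ball a r)).Preconnected := by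
    rw [Real.ball_eq_Ioo]
    exact preconnected_induce_hasse
      (ordConnected_Ioo.preimage_mono (Int.cast_mono.const_mul hh))
  have hprod : gridTrace h r {x} =
      ((fun n : ℤ ↦ h * n) ⁻¹' ball x.1 r) ×ˢ ((fun n : ℤ ↦ h * n) ⁻¹' ball x.2 r) := by
    rw [gridTrace, thickening_singleton, ← ball_prod_same]
    rfl
  rw [hprod, hasse_prod]
  exact preconnected_induce_boxProd_prod (hconn x.1) (hconn x.2)

theorem exists_preconnected_induce_gridTrace_singleton_subset {h r : ℝ} (hh : 0 < h) (hr : h ≤ r)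
    {S : Set (ℝ × ℝ)} (hS : IsPreconnected S) {x y : ℝ × ℝ} (hx : x ∈ S) (hy : y ∈ S) :
    ∃ u ⊆ gridTrace h r S, ((hasse (ℤ × ℤ)).induce u).Preconnected ∧
      gridTrace h r {x} ⊆ u ∧ gridTrace h r {y} ⊆ u := by
  refine hS.induction₂ (fun x y ↦ ∃ u ⊆ gridTrace h r S, ((hasse (ℤ × ℤ)).induce u).Preconnected ∧
    gridTrace h r {x} ⊆ u ∧ gridTrace h r {y} ⊆ u) ?_ ?_ ?_ hx hy
  · intro x hx
    obtain ⟨z, hz⟩ := exists_dist_meshPoint_lt hh x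
    have hnear : ∀ᶠ y in 𝓝[S] x, dist (meshPoint h z) y < h := nhdsWithin_le_nhds <|
      (continuous_const.dist continuous_id).continuousAt.eventually_lt continuousAt_const hz
    filter_upwards [hnear, self_mem_nhdsWithin] with y hzy hy
    refine ⟨gridTrace h r {x} ∪ gridTrace h r {y}, union_subset ?_ ?_, Connected.preconnected <|
      induce_union_connected ?_ ?_ ⟨z, ?_, ?_⟩, subset_union_left, subset_union_right⟩
    · exact gridTrace_mono le_rfl (singleton_subset_iff.2 hx)
    · exact gridTrace_mono le_rfl (singleton_subset_iff.2 hy)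
    · exact preconnected_induce_gridTrace_singleton hh.le r x
    · exact preconnected_induce_gridTrace_singleton hh.le r y
    · exact mem_gridTrace_singleton.2 (hz.trans_le hr)
    · exact mem_gridTrace_singleton.2 (hzy.trans_le hr)
  · rintro x y w - - - ⟨u, hu, huconn, hxu, hyu⟩ ⟨u', hu', huconn', hyu', hwu'⟩
    obtain ⟨z, hz⟩ := exists_dist_meshPoint_lt hh y
    have hzy : z ∈ gridTrace h r {y} := mem_gridTrace_singleton.2 (hz.trans_le hr)
    exact ⟨u ∪ u', union_subset hu hu',
      (induce_union_connected huconn huconn' ⟨z, hyu hzy, hyu' hzy⟩).preconnected,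
      hxu.trans subset_union_left, hwu'.trans subset_union_right⟩
  · rintro x y - - ⟨u, hu, huconn, hxu, hyu⟩
    exact ⟨u, hu, huconn, hyu, hxu⟩

theorem connected_induce_gridTrace {h r : ℝ} (hh : 0 < h) (hr : h ≤ r) {S : Set (ℝ × ℝ)}
    (hS : IsConnected S) : ((hasse (ℤ × ℤ)).induce (gridTrace h r S)).Connected := by
  obtain ⟨x, hx⟩ := hS.nonempty
  obtain ⟨z, hz⟩ := exists_dist_meshPoint_lt hh x
  have hzx : z ∈ gridTrace h r {x} := mem_gridTrace_singleton.2 (hz.trans_le hr)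
  refine induce_connected_of_patches z (gridTrace_mono le_rfl (singleton_subset_iff.2 hx) hzx)
    fun {w} hw ↦ ?_
  obtain ⟨y, hy, hwy⟩ := mem_thickening_iff.1 hw
  obtain ⟨u, hu, huconn, hxu, hyu⟩ :=
    exists_preconnected_induce_gridTrace_singleton_subset hh hr hS.isPreconnected hx hy
  exact ⟨u, hu, hxu hzx, hyu (mem_gridTrace_singleton.2 hwy), huconn _ _⟩

end Grid

section Thickening

variable {X : Type*} [MetricSpace X]

theorem eventually_disjoint_thickening {s t : Set X} (hs : IsCompact s) (ht : IsClosed t)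
    (hst : Disjoint s t) : ∀ᶠ r in 𝓝[>] (0 : ℝ), Disjoint (thickening r s) (thickening r t) := by
  obtain ⟨δ, hδ, hdisj⟩ := hst.exists_thickenings hs ht
  filter_upwards [Ioo_mem_nhdsGT hδ] with r hr
  exact hdisj.mono (thickening_mono hr.2.le s) (thickening_mono hr.2.le t)

theorem eventually_pairwise_disjoint_thickening {ι : Type*} [Finite ι] {s : ι → Set X}
    (hs : ∀ i, IsCompact (s i)) (hdisj : Pairwise (Function.onFun Disjoint s)) :
    ∀ᶠ r in 𝓝[>] (0 : ℝ), Pairwise (Function.onFun Disjoint fun i ↦ thickening r (s i)) := by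
  simp only [Pairwise, eventually_all]
  exact fun i j hij ↦ eventually_disjoint_thickening (hs i) (hs j).isClosed (hdisj hij)

end Thickening

namespace IsPlaneDrawing

variable {V E : Type} {ends : E → V × V} {pos : V → ℝ × ℝ} {γ : E → ℝ → ℝ × ℝ}

theorem exists_apply_eq_pos (h : IsPlaneDrawing ends pos γ) {e : E} {v : V}
    (he : IsIncident ends e v) : ∃ t ∈ Icc (0 : ℝ) 1, γ e t = pos v := by
  obtain ⟨-, -, hends, -, -⟩ := h
  rcases he with rfl | rfl
  exacts [⟨0, by simp, (hends e).1⟩, ⟨1, by simp, (hends e).2⟩]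

theorem pos_notMem_image_Icc (h : IsPlaneDrawing ends pos γ) {e e' : E} {v : V}
    (he : IsIncident ends e v) (he' : ¬IsIncident ends e' v) : pos v ∉ γ e' '' Icc 0 1 := by
  rintro ⟨t, ht, htv⟩
  obtain ⟨s, hs, hsv⟩ := h.exists_apply_eq_pos he
  obtain ⟨hinj, -, hends, -, hmeet⟩ := h
  have hne : e' ≠ e := by
    rintro rfl
    exact he' he
  rcases (hmeet e' e hne t ht s hs (htv.trans hsv.symm)).1 with rfl | rfl
  · exact he' (.inl (hinj ((hends e').1.symm.trans htv)))
  · exact he' (.inr (hinj ((hends e').2.symm.trans htv)))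

theorem pairwise_disjoint_image_Icc (h : IsPlaneDrawing ends pos γ) {ε : ℝ} (hε : 0 < ε) :
    Pairwise (Function.onFun Disjoint fun e ↦ γ e '' Icc ε (1 - ε)) := by
  obtain ⟨-, -, -, -, hmeet⟩ := h
  intro e e' hne
  refine disjoint_left.2 ?_
  rintro _ ⟨s, hs, rfl⟩ ⟨t, ht, hst⟩
  have hs01 : s ∈ Icc (0 : ℝ) 1 := ⟨by linarith [hs.1], by linarith [hs.2]⟩
  have ht01 : t ∈ Icc (0 : ℝ) 1 := ⟨by linarith [ht.1], by linarith [ht.2]⟩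
  rcases (hmeet e e' hne s hs01 t ht01 hst.symm).1 with rfl | rfl
  · exact hs.1.not_gt hε
  · linarith [hs.2]

theorem pos_mem_closure_image_Ioo (h : IsPlaneDrawing ends pos γ) {e : E} {v : V}
    (he : IsIncident ends e v) : pos v ∈ closure (γ e '' Ioo 0 1) := by
  obtain ⟨t, ht, htv⟩ := h.exists_apply_eq_pos he
  obtain ⟨-, hcont, -⟩ := h
  rw [← htv]
  exact ((hcont e t ht).mono Ioo_subset_Icc_self).mem_closure_image
    (by rwa [closure_Ioo zero_ne_one])

theorem eventually_image_Icc_inter_ball_nonempty (h : IsPlaneDrawing ends pos γ) {e : E} {v : V}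
    (he : IsIncident ends e v) {r : ℝ} (hr : 0 < r) :
    ∀ᶠ ε in 𝓝[>] (0 : ℝ), (γ e '' Icc ε (1 - ε) ∩ ball (pos v) r).Nonempty := by
  obtain ⟨_, ⟨t, ht, rfl⟩, htr⟩ := mem_closure_iff.1 (h.pos_mem_closure_image_Ioo he) r hr
  filter_upwards [Ioo_mem_nhdsGT ht.1, Ioo_mem_nhdsGT (sub_pos.2 ht.2)] with ε hε hε'
  exact ⟨γ e t, mem_image_of_mem _ ⟨hε.2.le, by linarith [hε'.2]⟩, by rwa [mem_ball']⟩

theorem isMinorModel_gridTrace (h : IsPlaneDrawing ends pos γ) {r ε ρ : ℝ} (hε : 0 < ε)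
    (hε' : ε < 1 / 2) (hρ : 0 < ρ) (hρr : ρ < r / 2)
    (hpos : Pairwise (Function.onFun Disjoint fun v ↦ thickening r {pos v}))
    (harc_pos : ∀ e e' v, IsIncident ends e v → ¬IsIncident ends e' v →
      Disjoint (thickening r (γ e' '' Icc 0 1)) (thickening r {pos v}))
    (harc : Pairwise (Function.onFun Disjoint fun e ↦ thickening ρ (γ e '' Icc ε (1 - ε))))
    (hball : ∀ e v, IsIncident ends e v →
      (γ e '' Icc ε (1 - ε) ∩ ball (pos v) (r / 2)).Nonempty) :
    IsMinorModel (hasse (ℤ × ℤ)) ends (fun v ↦ gridTrace ρ r {pos v})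
      fun e ↦ gridTrace ρ ρ (γ e '' Icc ε (1 - ε)) := by
  have hsub : Icc ε (1 - ε) ⊆ Icc 0 1 := Icc_subset_Icc hε.le (by linarith)
  refine ⟨fun v ↦ ?_, fun e ↦ ?_, ?_, ?_, ?_, ?_⟩
  · exact connected_induce_gridTrace hρ (by linarith) isConnected_singleton
  · exact connected_induce_gridTrace hρ le_rfl <|
      (isConnected_Icc (by linarith)).image _ ((h.2.1 e).mono hsub)
  · exact fun v w hvw ↦ (hpos hvw).preimage _
  · exact fun e e' hne ↦ (harc hne).preimage _
  · intro e e' v he he'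
    exact ((harc_pos e e' v he he').preimage _).mono_left
      (gridTrace_mono (by linarith) (image_mono hsub))
  · intro e v he
    obtain ⟨x, hx, hxv⟩ := hball e v he
    obtain ⟨z, hz⟩ := exists_dist_meshPoint_lt hρ x
    refine ⟨z, mem_thickening_iff.2 ⟨x, hx, hz⟩, mem_gridTrace_singleton.2 ?_⟩
    linarith [dist_triangle (meshPoint ρ z) x (pos v), mem_ball.1 hxv]

theorem exists_isMinorModel [Finite V] [Finite E] (h : IsPlaneDrawing ends pos γ) :
    ∃ branch link, IsMinorModel (hasse (ℤ × ℤ)) ends branch link := by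
  have hcompact {a b} (hab : Icc a b ⊆ Icc 0 1) e : IsCompact (γ e '' Icc a b) :=
    isCompact_Icc.image_of_continuousOn ((h.2.1 e).mono hab)
  obtain ⟨r, hpos, harc_pos, hr⟩ : ∃ r, Pairwise (Function.onFun Disjoint fun v ↦
      thickening r {pos v}) ∧ (∀ e e' v, IsIncident ends e v → ¬IsIncident ends e' v →
      Disjoint (thickening r (γ e' '' Icc 0 1)) (thickening r {pos v})) ∧ 0 < r := by
    refine Eventually.exists (f := 𝓝[>] 0) <| .and ?_ <| .and ?_ self_mem_nhdsWithin
    · exact eventually_pairwise_disjoint_thickening (fun v ↦ isCompact_singleton)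
        fun v w hvw ↦ by simpa using h.1.ne hvw
    · simp only [eventually_all]
      exact fun e e' v he he' ↦ eventually_disjoint_thickening (hcompact Subset.rfl e')
        isClosed_singleton (disjoint_singleton_right.2 (h.pos_notMem_image_Icc he he'))
  obtain ⟨ε, hball, hε, hε'⟩ : ∃ ε : ℝ, (∀ e v, IsIncident ends e v →
      (γ e '' Icc ε (1 - ε) ∩ ball (pos v) (r / 2)).Nonempty) ∧ 0 < ε ∧ ε < 1 / 2 := by
    refine Eventually.exists (f := 𝓝[>] 0) <| .and ?_ (Ioo_mem_nhdsGT one_half_pos)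
    simp only [eventually_all]
    exact fun e v he ↦ h.eventually_image_Icc_inter_ball_nonempty he (half_pos hr)
  obtain ⟨ρ, harc, hρ, hρr⟩ : ∃ ρ, Pairwise (Function.onFun Disjoint fun e ↦
      thickening ρ (γ e '' Icc ε (1 - ε))) ∧ 0 < ρ ∧ ρ < r / 2 :=
    Eventually.exists (f := 𝓝[>] 0) <| (eventually_pairwise_disjoint_thickening
      (hcompact (Icc_subset_Icc hε.le (by linarith))) (h.pairwise_disjoint_image_Icc hε)).and
      (Ioo_mem_nhdsGT (half_pos hr))
  exact ⟨_, _, h.isMinorModel_gridTrace hε hε' hρ hρr hpos harc_pos harc hball⟩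

end IsPlaneDrawing

theorem planar_maxdeg_three_grid_embedding_general {V E : Type} [Finite V]
    [Fintype E] [DecidableEq V] [DecidableEq E] (ends : E → V × V)
    (hdeg : ∀ v : V, (incidentEdges ends v).card ≤ 3)
    (hplanar : ∃ (pos : V → ℝ × ℝ) (γ : E → ℝ → ℝ × ℝ),
      IsPlaneDrawing ends pos γ) :
    ∃ (pos : V → ℤ × ℤ) (path : E → List (ℤ × ℤ)),
      Function.Injective pos ∧
      (∀ e, (path e).head? = some (pos (ends e).1) ∧
        (path e).getLast? = some (pos (ends e).2) ∧
        (path e).Nodup ∧ List.IsChain gridAdj (path e)) ∧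
      (∀ e e', e ≠ e' → ∀ z : ℤ × ℤ, z ∈ path e → z ∈ path e' →
        (z = pos (ends e).1 ∨ z = pos (ends e).2) ∧
        (z = pos (ends e').1 ∨ z = pos (ends e').2)) := by
  have hdeg' v : {e | IsIncident ends e v}.encard ≤ 3 := by
    have hcoe : {e | IsIncident ends e v} = incidentEdges ends v := by
      simp [incidentEdges, IsIncident]
    simpa [hcoe, encard_coe_eq_coe_finsetCard] using mod_cast hdeg v
  obtain ⟨_, _, hdraw⟩ := hplanar
  obtain ⟨_, _, hmodel⟩ := hdraw.exists_isMinorModel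
  obtain ⟨pos, path, hsub⟩ := hmodel.exists_isSubdivision hdeg'
  refine ⟨pos, fun e ↦ (path e).support, hsub.injective_pos, fun e ↦ ⟨?_, ?_, ?_, ?_⟩, ?_⟩
  · simp [List.head?_eq_some_head (path e).support_ne_nil]
  · simp [List.getLast?_eq_some_getLast (path e).support_ne_nil]
  · exact (hsub.isPath e).support_nodup
  · exact (path e).isChain_adj_support.imp fun _ _ ↦ hasse_adj_iff_gridAdj.1
  · intro e e' hne z hz hz'
    obtain ⟨v, hv, hv', rfl⟩ := hsub.eq_pos_of_mem_of_mem hne hz hz'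
    exact ⟨hv.imp (congrArg pos ·.symm) (congrArg pos ·.symm),
      hv'.imp (congrArg pos ·.symm) (congrArg pos ·.symm)⟩

/-- Every simple planar graph of maximum degree at most `3` admits a grid
embedding: vertices go injectively to points of `ℤ²`, each edge becomes a
simple rectilinear grid path between the points of its endpoints, and paths
of distinct edges are internally disjoint (meeting at most at grid points of
common endpoint vertices). -/
theorem planar_maxdeg_three_grid_embedding {V E : Type} [Fintype V]
    [Fintype E] [DecidableEq V] [DecidableEq E] (ends : E → V × V)
    (hsimple_loop : ∀ e : E, (ends e).1 ≠ (ends e).2)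
    (hsimple_par : ∀ e e' : E, e ≠ e' →
      ({(ends e).1, (ends e).2} : Set V) ≠ {(ends e').1, (ends e').2})
    (hdeg : ∀ v : V, (incidentEdges ends v).card ≤ 3)
    (hplanar : ∃ (pos : V → ℝ × ℝ) (γ : E → ℝ → ℝ × ℝ),
      IsPlaneDrawing ends pos γ) :
    ∃ (pos : V → ℤ × ℤ) (path : E → List (ℤ × ℤ)),
      Function.Injective pos ∧
      (∀ e, (path e).head? = some (pos (ends e).1) ∧
        (path e).getLast? = some (pos (ends e).2) ∧
        (path e).Nodup ∧ List.Chain' gridAdj (path e)) ∧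
      (∀ e e', e ≠ e' → ∀ z : ℤ × ℤ, z ∈ path e → z ∈ path e' →
        (z = pos (ends e).1 ∨ z = pos (ends e).2) ∧
        (z = pos (ends e').1 ∨ z = pos (ends e').2)) :=
  planar_maxdeg_three_grid_embedding_general ends hdeg hplanar
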